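/- Let R be a commutative F₂-algebra and q : ℤ × ℤ → R a finitely supported function. Suppose that in the Laurent polynomial ring R[s, s⁻¹, t, t⁻¹] one has Σ_{i,j} q(i,j) (s + s²t⁻¹)^j t^i = Σ_{i,j} q(i,j) (t + t²s⁻¹)^j s^i, where the sums run over the support of q and all j in the support are nonnegative. Then for all integers i, j one has q(i,j) = Σ_ℓ C(ℓ−j−1, 2ℓ−i) q(i+j−ℓ, ℓ), where C(ℓ−j−1, 2ℓ−i) is the binomial coefficient mod 2, interpreted for negative top entry via C(−m, k) ≡ C(m+k−1, k) (mod 2) for m ≥ 1, k ≥ 0, and 0 when 2ℓ−i < 0. -/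

import Mathlib

/-- The binomial coefficient `C(n, k)` (mod 2, as a natural number input to a mod-2 cast)
for integer `n` and integer `k`: it is `0` for `k < 0`, the usual `C(n,k)` for `n ≥ 0`,
and for negative top entry `n = −m` (`m ≥ 1`) it is interpreted via
`C(−m, k) ≡ C(m+k−1, k) (mod 2)`. -/
def chooseMod2 (n k : ℤ) : ℕ :=
  if k < 0 then 0
  else if 0 ≤ n then n.toNat.choose k.toNat
  else ((-n).toNat + k.toNat - 1).choose k.toNat

theorem two_zero_of_alg (R : Type*) [CommRing R] [Algebra (ZMod 2) R] : (2 : R) = 0 := by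
  have h : algebraMap (ZMod 2) R 2 = 0 := by
    rw [show (2 : ZMod 2) = 0 from rfl, map_zero]
  rwa [map_ofNat] at h

theorem chooseMod2_pascal {R : Type*} [CommRing R] (h2 : (2 : R) = 0) (n k : ℤ) :
    (chooseMod2 (n + 1) k : R) = chooseMod2 n k + chooseMod2 n (k - 1) := by
  rcases lt_trichotomy k 0 with hk | rfl | hk
  · have : k - 1 < 0 := by lia
    simp [chooseMod2, hk, this]
  · simp [chooseMod2]
  · obtain ⟨m, rfl⟩ : ∃ m : ℕ, k = m + 1 := ⟨(k - 1).toNat, by lia⟩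
    have e1 : ((m : ℤ) + 1).toNat = m + 1 := by lia
    have e2 : ((m : ℤ) + 1 - 1) = m := by lia
    have e3 : ¬ ((m : ℤ) + 1 < 0) := by lia
    have e4 : ¬ ((m : ℤ) < 0) := by lia
    rcases lt_trichotomy n (-1) with hn | rfl | hn
    · obtain ⟨r, rfl⟩ : ∃ r : ℕ, n = -(r + 2) := ⟨(-n - 2).toNat, by lia⟩
      have a1 : ¬ (0 ≤ -((r : ℤ) + 2) + 1) := by lia
      have a2 : ¬ (0 ≤ -((r : ℤ) + 2)) := by lia
      have a3 : (-(-((r : ℤ) + 2) + 1)).toNat + (m + 1) - 1 = r + m + 1 := by lia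
      have a4 : (- -((r : ℤ) + 2)).toNat + (m + 1) - 1 = (r + m + 1) + 1 := by lia
      have a5 : (- -((r : ℤ) + 2)).toNat + m - 1 = r + m + 1 := by lia
      simp only [chooseMod2, e1, e2, e3, e4, a1, a2, if_false, Int.toNat_natCast, a3, a4, a5]
      rw [Nat.choose_succ_succ (r + m + 1) m]
      push_cast
      linear_combination (-((r + m + 1).choose m : R)) * h2
    · simp [chooseMod2, e1, e3, e4]
      linear_combination -h2
    · obtain ⟨r, rfl⟩ : ∃ r : ℕ, n = r := ⟨n.toNat, by lia⟩
      have a1 : (0 ≤ (r : ℤ) + 1) := by lia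
      have a2 : (0 ≤ (r : ℤ)) := by lia
      have a3 : ((r : ℤ) + 1).toNat = r + 1 := by lia
      simp only [chooseMod2, e1, e2, e3, e4, a1, a2, a3, if_false, if_true, Int.toNat_natCast]
      rw [Nat.choose_succ_succ]
      push_cast
      ring

theorem chooseMod2_central {R : Type*} [CommRing R] (h2 : (2 : R) = 0) (n : ℤ) :
    (chooseMod2 (-n - 1) n : R) = if n = 0 then 1 else 0 := by
  rcases lt_trichotomy n 0 with hn | rfl | hn
  · simp [chooseMod2, hn, hn.ne]
  · simp [chooseMod2]
  · obtain ⟨r, rfl⟩ : ∃ r : ℕ, n = r + 1 := ⟨(n - 1).toNat, by lia⟩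
    have e1 : ((r : ℤ) + 1).toNat = r + 1 := by lia
    have e2 : ¬ ((r : ℤ) + 1 < 0) := by lia
    have e3 : ¬ ((r : ℤ) + 1 = 0) := by lia
    have e4 : ¬ (0 ≤ -((r : ℤ) + 1) - 1) := by lia
    have e5 : (-(-((r : ℤ) + 1) - 1)).toNat + (r + 1) - 1 = 2 * (r + 1) := by lia
    simp only [chooseMod2, e1, e2, e3, e4, e5, if_false]
    obtain ⟨c, hc⟩ := Nat.two_dvd_centralBinom_succ r
    rw [Nat.centralBinom] at hc
    rw [hc]
    push_cast
    rw [h2, zero_mul]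

open LaurentPolynomial in
/-- The residue functional: `s ^ a * t ^ b` goes to `C(n, e - a)` if `a + b = d`, else to `0`. -/
noncomputable def resFun (R : Type*) [CommRing R] (d e n : ℤ) :
    LaurentPolynomial (LaurentPolynomial R) →+ R :=
  (Finsupp.liftAddHom fun a : ℤ =>
    (AddMonoidHom.mulLeft (chooseMod2 n (e - a) : R)).comp
      ((Finsupp.applyAddHom (d - a)).comp
        (AddMonoidAlgebra.coeffAddEquiv : LaurentPolynomial R ≃+ (ℤ →₀ R)).toAddMonoidHom)).comp
    (AddMonoidAlgebra.coeffAddEquiv :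
      LaurentPolynomial (LaurentPolynomial R) ≃+ (ℤ →₀ LaurentPolynomial R)).toAddMonoidHom

open LaurentPolynomial in
theorem resFun_single {R : Type*} [CommRing R] (d e n : ℤ) (g : LaurentPolynomial R) (a : ℤ) :
    resFun R d e n (C g * T a) = chooseMod2 n (e - a) * g.coeff (d - a) := by
  rw [← single_eq_C_mul_T]
  simp [resFun, -single_eq_C_mul_T]

open LaurentPolynomial in
theorem resFun_mono {R : Type*} [CommRing R] (d e n : ℤ) (r : R) (a b : ℤ) :
    resFun R d e n (C (C r) * T a * C (T b)) =
      if a + b = d then chooseMod2 n (e - a) * r else 0 := by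
  rw [mul_right_comm, ← map_mul, resFun_single, ← single_eq_C_mul_T]
  rw [AddMonoidAlgebra.coeff_single, Finsupp.single_apply]
  by_cases h : a + b = d
  · rw [if_pos (by lia), if_pos h]
  · rw [if_neg (by lia), if_neg h, mul_zero]

open LaurentPolynomial in
theorem resFun_mul {R : Type*} [CommRing R] (h2 : (2 : R) = 0) (d e n : ℤ)
    (F : LaurentPolynomial (LaurentPolynomial R)) :
    resFun R d e n (F * (1 + T 1 * C (T (-1)))) = resFun R d e (n + 1) F := by
  induction F using LaurentPolynomial.induction_on' with
  | add p q hp hq => rw [add_mul, map_add, map_add, hp, hq]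
  | C_mul_T a g =>
    induction g using LaurentPolynomial.induction_on' with
    | add p q hp hq => simp only [map_add, add_mul] at hp hq ⊢; rw [← hp, ← hq]
    | C_mul_T b r =>
      have h1 : (C (C r * T b) * T a * (1 + T 1 * C (T (-1))) :
          LaurentPolynomial (LaurentPolynomial R)) =
          C (C r) * T a * C (T b) + C (C r) * T (a + 1) * C (T (b + -1)) := by
        rw [T_add a, T_add b, map_mul, map_mul]; ring
      have h3 : (C (C r * T b) * T a : LaurentPolynomial (LaurentPolynomial R)) =
          C (C r) * T a * C (T b) := by
        rw [map_mul]; ring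
      rw [h1, h3, map_add, resFun_mono, resFun_mono, resFun_mono, chooseMod2_pascal h2,
        show a + 1 + (b + -1) = a + b by ring, show e - (a + 1) = e - a - 1 by ring]
      split_ifs
      · ring
      · simp

open LaurentPolynomial in
theorem resFun_mul_pow {R : Type*} [CommRing R] (h2 : (2 : R) = 0) (d e : ℤ) (l : ℕ) (n : ℤ)
    (F : LaurentPolynomial (LaurentPolynomial R)) :
    resFun R d e n (F * (1 + T 1 * C (T (-1))) ^ l) = resFun R d e (n + l) F := by
  induction l generalizing n with
  | zero => simp
  | succ l ih =>
    rw [pow_succ, ← mul_assoc, resFun_mul h2, ih]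
    congr 2
    push_cast; ring

open LaurentPolynomial in
/-- The algebraic Adem relations: if a finitely supported `q : ℤ × ℤ → R` over a
commutative `𝔽₂`-algebra `R` (with all second indices in the support nonnegative)
satisfies `Σ q(i,j) (s+s²t⁻¹)^j t^i = Σ q(i,j) (t+t²s⁻¹)^j s^i` in `R[s,s⁻¹,t,t⁻¹]`,
then `q(i,j) = Σ_ℓ C(ℓ−j−1, 2ℓ−i) q(i+j−ℓ, ℓ)` for all integers `i, j`. -/
theorem stmt_7 (R : Type*) [CommRing R] [Algebra (ZMod 2) R] (q : ℤ × ℤ →₀ R)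
    (hsupp : ∀ p ∈ q.support, 0 ≤ p.2)
    (hsym : ∑ p ∈ q.support,
        (C (C (q p)) * (T 1 + T 2 * C (T (-1))) ^ p.2.toNat * C (T p.1) :
          LaurentPolynomial (LaurentPolynomial R)) =
      ∑ p ∈ q.support,
        (C (C (q p)) * (C (T 1) + C (T 2) * T (-1)) ^ p.2.toNat * T p.1 :
          LaurentPolynomial (LaurentPolynomial R))) :
    ∀ i j : ℤ, q (i, j) =
      ∑ p ∈ q.support,
        if p.1 = i + j - p.2 then (chooseMod2 (p.2 - j - 1) (2 * p.2 - i) : R) * q p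
        else 0 := by
  intro i j
  have h2 := two_zero_of_alg R
  have key := congrArg (resFun R (i + j) j (-j - 1)) hsym
  rw [map_sum, map_sum] at key
  have hL : ∀ p ∈ q.support, resFun R (i + j) j (-j - 1)
      (C (C (q p)) * (T 1 + T 2 * C (T (-1))) ^ p.2.toNat * C (T p.1)) =
      if p = (i, j) then q p else 0 := by
    intro p hp
    obtain ⟨k, l⟩ := p
    obtain ⟨m, rfl⟩ : ∃ m : ℕ, l = m := ⟨l.toNat, by have := hsupp _ hp; simp at this; lia⟩
    have e1 : (C (C (q (k, (m : ℤ)))) * (T 1 + T 2 * C (T (-1))) ^ m * C (T k) :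
        LaurentPolynomial (LaurentPolynomial R)) =
        (C (C (q (k, (m : ℤ)))) * T m * C (T k)) * (1 + T 1 * C (T (-1))) ^ m := by
      have : (T 1 + T 2 * C (T (-1)) : LaurentPolynomial (LaurentPolynomial R)) =
          T 1 * (1 + T 1 * C (T (-1))) := by
        rw [show (2 : ℤ) = 1 + 1 by norm_num, T_add]; ring
      rw [this, mul_pow, T_pow, mul_one]; ring
    simp only [Int.toNat_natCast]
    rw [e1, resFun_mul_pow h2, resFun_mono,
      show -j - 1 + (m : ℤ) = -(j - m) - 1 by ring, chooseMod2_central h2]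
    simp only [Prod.mk.injEq]
    split_ifs <;> first | lia | simp
  have hR : ∀ p ∈ q.support, resFun R (i + j) j (-j - 1)
      (C (C (q p)) * (C (T 1) + C (T 2) * T (-1)) ^ p.2.toNat * T p.1) =
      if p.1 = i + j - p.2 then (chooseMod2 (p.2 - j - 1) (2 * p.2 - i) : R) * q p
        else 0 := by
    intro p hp
    obtain ⟨k, l⟩ := p
    obtain ⟨m, rfl⟩ : ∃ m : ℕ, l = m := ⟨l.toNat, by have := hsupp _ hp; simp at this; lia⟩
    have e1 : (C (C (q (k, (m : ℤ)))) * (C (T 1) + C (T 2) * T (-1)) ^ m * T k :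
        LaurentPolynomial (LaurentPolynomial R)) =
        (C (C (q (k, (m : ℤ)))) * T (m * (-1) + k) * C (T (m * 2))) *
          (1 + T 1 * C (T (-1))) ^ m := by
      have h3 : (T 1 * T (-1) : LaurentPolynomial (LaurentPolynomial R)) = 1 := by
        rw [← T_add]; simp
      have h4 : (C (T 2) * C (T (-1)) : LaurentPolynomial (LaurentPolynomial R)) = C (T 1) := by
        rw [← map_mul, ← T_add]; norm_num
      have : (C (T 1) + C (T 2) * T (-1) : LaurentPolynomial (LaurentPolynomial R)) =
          (T (-1) * C (T 2)) * (1 + T 1 * C (T (-1))) := by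
        linear_combination (-C (T 1)) * h3 - (T 1 * T (-1)) * h4
      rw [this, mul_pow, mul_pow, T_pow, ← map_pow, T_pow, T_add]; ring
    simp only [Int.toNat_natCast]
    rw [e1, resFun_mul_pow h2, resFun_mono]
    by_cases h : k = i + j - m
    · rw [if_pos (by lia), if_pos h]
      congr 3 <;> lia
    · rw [if_neg (by lia), if_neg h]
  rw [Finset.sum_congr rfl hL, Finset.sum_congr rfl hR] at key
  rw [← key, Finset.sum_ite_eq' q.support (i, j) (fun p => q p)]
  split_ifs with h
  · rfl
  · simpa using h
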